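/- Let f ∈ ℤ[t] be a square-free polynomial whose coefficients have no common factor and have absolute value at most H. Then for D ≤ H^A, the sum over square-free d > D of ρ_f(d²)/d² is O(D^(-1)·H^ε). -/

import Mathlib

open scoped Classical

/-- Number of roots of `f` modulo `m` in `[1, m]`. -/
def polyRho (f : Polynomial ℤ) (m : ℕ) : ℕ :=
  ((Finset.Icc 1 m).filter (fun n : ℕ => (m : ℤ) ∣ f.eval (n : ℤ))).card

open Polynomial

theorem Nat.succ_le_mul_two_rpow {η : ℝ} (hη : 0 < η) (a : ℕ) :
    (a + 1 : ℝ) ≤ (1 + 1 / (η * Real.log 2)) * (2 : ℝ) ^ (a * η) := by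
  have hl : 0 < η * Real.log 2 := mul_pos hη (Real.log_pos one_lt_two)
  have h1 : a * (η * Real.log 2) + 1 ≤ (2 : ℝ) ^ (a * η) := by
    rw [Real.rpow_def_of_pos two_pos]
    refine (Real.add_one_le_exp _).trans_eq ?_
    ring_nf
  have h2 : (1 : ℝ) ≤ (2 : ℝ) ^ (a * η) := Real.one_le_rpow one_le_two (by positivity)
  have h3 : (a : ℝ) ≤ 1 / (η * Real.log 2) * (2 : ℝ) ^ (a * η) := by
    rw [div_mul_eq_mul_div, one_mul, le_div_iff₀ hl]
    linarith
  linarith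

/-- The divisor bound `τ(n) ≪ n ^ η`. -/
theorem Nat.exists_card_divisors_le_rpow {η : ℝ} (hη : 0 < η) :
    ∃ C : ℝ, 0 < C ∧ ∀ n : ℕ, n ≠ 0 → (n.divisors.card : ℝ) ≤ C * (n : ℝ) ^ η := by
  set K : ℝ := 1 + 1 / (η * Real.log 2) with hK
  have hl : 0 < η * Real.log 2 := mul_pos hη (Real.log_pos one_lt_two)
  have hK1 : 1 ≤ K := by rw [hK]; linarith [one_div_pos.mpr hl]
  set P : ℕ := ⌈(2 : ℝ) ^ (1 / η)⌉₊ with hP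
  refine ⟨K ^ P, by positivity, fun n hn => ?_⟩
  have key : ∀ p ∈ n.primeFactors, ((n.factorization p + 1 : ℕ) : ℝ) ≤
      (if p < P then K else 1) * ((p : ℝ) ^ n.factorization p) ^ η := by
    intro p hp
    have hp2 : (2 : ℝ) ≤ p := by exact_mod_cast (Nat.prime_of_mem_primeFactors hp).two_le
    have hpow : ((p : ℝ) ^ n.factorization p) ^ η = (p : ℝ) ^ (n.factorization p * η) := by
      rw [← Real.rpow_natCast, ← Real.rpow_mul (by positivity)]
    push_cast
    split_ifs with h
    · refine (Nat.succ_le_mul_two_rpow hη _).trans ?_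
      rw [hpow]
      gcongr
    · have h2 : (2 : ℝ) ≤ (p : ℝ) ^ η := by
        have h3 : (2 : ℝ) ^ (1 / η) ≤ p := (Nat.le_ceil _).trans (by exact_mod_cast not_lt.mp h)
        calc (2 : ℝ) = ((2 : ℝ) ^ (1 / η)) ^ η := by
              rw [← Real.rpow_mul two_pos.le, one_div_mul_cancel hη.ne', Real.rpow_one]
          _ ≤ _ := by gcongr
      rw [one_mul, hpow, mul_comm, Real.rpow_mul (by positivity), Real.rpow_natCast]
      calc ((n.factorization p : ℝ) + 1) ≤ 2 ^ n.factorization p := by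
            exact_mod_cast Nat.lt_two_pow_self
        _ ≤ _ := by gcongr
  rw [Nat.card_divisors hn]
  push_cast
  calc ∏ p ∈ n.primeFactors, ((n.factorization p : ℝ) + 1)
      ≤ ∏ p ∈ n.primeFactors,
          ((if p < P then K else 1) * ((p : ℝ) ^ n.factorization p) ^ η) :=
        Finset.prod_le_prod (fun _ _ => by positivity) fun p hp => by exact_mod_cast key p hp
    _ = K ^ (n.primeFactors.filter (· < P)).card * (n : ℝ) ^ η := by
        rw [Finset.prod_mul_distrib, Real.finsetProd_rpow _ _ (fun _ _ => by positivity),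
          ← Finset.prod_filter, Finset.prod_const]
        congr 2
        exact_mod_cast Nat.prod_factorization_pow_eq_self hn
    _ ≤ K ^ P * (n : ℝ) ^ η := by
        gcongr
        refine (Finset.card_le_card (t := Finset.range P) fun p hp => ?_).trans_eq
          (Finset.card_range P)
        simpa using (Finset.mem_filter.mp hp).2

namespace Polynomial

theorem IsPrimitive.squarefree_map_intCast {f : ℤ[X]} (hf : f.IsPrimitive) (hs : Squarefree f) :
    Squarefree (f.map (Int.castRingHom ℚ)) := by
  intro g hg
  have hf0 : f.map (Int.castRingHom ℚ) ≠ 0 :=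
    (Polynomial.map_ne_zero_iff (RingHom.injective_int _)).mpr hf.ne_zero
  have hg0 : g ≠ 0 := by
    rintro rfl
    exact hf0 (by simpa using hg)
  set G := (IsLocalization.integerNormalization (nonZeroDivisors ℤ) g).primPart with hG
  obtain ⟨b, hb, hb'⟩ := IsLocalization.integerNormalization_spec (nonZeroDivisors ℤ) g
  have hGg : G.map (Int.castRingHom ℚ) ∣ g := by
    rw [eq_C_content_mul_primPart (IsLocalization.integerNormalization (nonZeroDivisors ℤ) g),
      Polynomial.map_mul, algebraMap_int_eq, ← hG, ← Int.cast_smul_eq_zsmul ℚ,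
      smul_eq_C_mul] at hb'
    have hu : IsUnit (C (b : ℚ)) :=
      isUnit_C.mpr (isUnit_iff_ne_zero.mpr (by exact_mod_cast nonZeroDivisors.ne_zero hb))
    exact hu.dvd_mul_left.mp (hb' ▸ Dvd.intro_left _ rfl)
  have hGp : G.IsPrimitive := isPrimitive_primPart _
  refine isUnit_or_eq_zero_of_isUnit_integerNormalization_primPart (R := ℤ) hg0 (hs G ?_)
  rw [IsPrimitive.Int.dvd_iff_map_cast_dvd_map_cast _ _ (hGp.mul hGp), Polynomial.map_mul]
  exact (mul_dvd_mul hGg hGg).trans hg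

/-- A nonzero integer in the ideal `(f, f')`, of size polynomial in the height of `f`. -/
theorem exists_mul_add_derivative_mul_eq_C {f : ℤ[X]} (hf : f.IsPrimitive) (hs : Squarefree f)
    {d : ℕ} (hd : f.natDegree ≤ d) {H : ℝ} (hH : 1 ≤ H) (hc : ∀ i, (|f.coeff i| : ℝ) ≤ H) :
    ∃ R : ℤ, R ≠ 0 ∧ (|R| : ℝ) ≤ (2 * d).factorial * ((d + 1) * H) ^ (2 * d) ∧
      ∃ p q : ℤ[X], f * p + f.derivative * q = C R := by
  have hB : (1 : ℝ) ≤ (d + 1) * H := by nlinarith [(Nat.cast_nonneg d : (0 : ℝ) ≤ d)]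
  rcases Nat.eq_zero_or_pos f.natDegree with h0 | h0
  · obtain ⟨a, rfl⟩ := natDegree_eq_zero.mp h0
    have ha : IsUnit a := hf a dvd_rfl
    refine ⟨1, one_ne_zero, ?_, C a, 0, ?_⟩
    · have : (1 : ℝ) ≤ (2 * d).factorial := by exact_mod_cast Nat.factorial_pos _
      have := one_le_pow₀ hB (n := 2 * d)
      norm_num
      nlinarith
    · rw [← C_mul, Int.isUnit_mul_self ha]; simp
  · refine ⟨f.resultant f.derivative, ?_, ?_, ?_⟩
    · have hsep := PerfectField.separable_iff_squarefree.mpr (hf.squarefree_map_intCast hs)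
      have h1 := resultant_ne_zero _ _ hsep
      rw [derivative_map, natDegree_map_eq_of_injective (RingHom.injective_int _),
        natDegree_map_eq_of_injective (RingHom.injective_int _), resultant_map_map] at h1
      exact fun h => h1 (by rw [h, map_zero])
    · have hfc : ∀ i, |(f.coeff i : ℝ)| ≤ (d + 1) * H := fun i =>
        (hc i).trans (by nlinarith [(Nat.cast_nonneg d : (0 : ℝ) ≤ d)])
      have hdc : ∀ i, |(f.derivative.coeff i : ℝ)| ≤ (d + 1) * H := by
        intro i
        rw [coeff_derivative]
        rcases lt_or_ge d i with hi | hi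
        · rw [coeff_eq_zero_of_natDegree_lt (by lia)]
          simpa using zero_le_one.trans hB
        · have hi' : (i : ℝ) ≤ d := by exact_mod_cast hi
          push_cast
          rw [abs_mul, abs_of_nonneg (by positivity : (0 : ℝ) ≤ (i : ℝ) + 1), mul_comm]
          gcongr
          exact hc _
      have hdet := Matrix.det_le (A := (sylvester f f.derivative f.natDegree
          f.derivative.natDegree).map (Int.castRingHom ℝ)) (abv := AbsoluteValue.abs)
        (x := (d + 1) * H) fun i j => by
          induction j using Fin.addCases with
          | left j =>
            simp only [sylvester, Matrix.map_apply, Matrix.of_apply, Fin.addCases_left]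
            split_ifs
            · simpa using hdc _
            · simpa using zero_le_one.trans hB
          | right j =>
            simp only [sylvester, Matrix.map_apply, Matrix.of_apply, Fin.addCases_right]
            split_ifs
            · simpa using hfc _
            · simpa using zero_le_one.trans hB
      rw [← RingHom.mapMatrix_apply, ← RingHom.map_det, Fintype.card_fin] at hdet
      have hle : f.natDegree + f.derivative.natDegree ≤ 2 * d := by
        have := natDegree_derivative_le f
        lia
      rw [nsmul_eq_mul] at hdet
      refine le_trans (show |((f.resultant f.derivative : ℤ) : ℝ)| ≤ _ from hdet) ?_
      gcongr
    · obtain ⟨p, q, -, -, h⟩ := exists_mul_add_mul_eq_C_resultant f f.derivative le_rfl le_rfl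
        (Or.inl h0.ne')
      exact ⟨p, q, h⟩

/-- The roots of an integer polynomial in `ℤ/mℤ`. -/
def rootSetMod (f : ℤ[X]) (m : ℕ) : Set (ZMod m) := {x | aeval x f = 0}

theorem intCast_mem_rootSetMod {f : ℤ[X]} {m : ℕ} {a : ℤ} :
    (a : ZMod m) ∈ f.rootSetMod m ↔ (m : ℤ) ∣ f.eval a := by
  have h := aeval_algebraMap_apply_eq_algebraMap_eval (A := ZMod m) a f
  rw [algebraMap_int_eq, eq_intCast, eq_intCast] at h
  rw [rootSetMod, Set.mem_ofPred_eq, h, ZMod.intCast_zmod_eq_zero_iff_dvd]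

theorem map_mem_rootSetMod {f : ℤ[X]} {m n : ℕ} (φ : ZMod m →+* ZMod n) {x : ZMod m}
    (hx : x ∈ f.rootSetMod m) : φ x ∈ f.rootSetMod n := by
  have h := aeval_algHom_apply φ.toIntAlgHom x f
  rw [show aeval x f = 0 from hx, map_zero] at h
  exact h

theorem polyRho_le_ncard_rootSetMod (f : ℤ[X]) {m : ℕ} (hm : m ≠ 0) :
    polyRho f m ≤ (f.rootSetMod m).ncard := by
  have : NeZero m := ⟨hm⟩
  rw [polyRho, ← Set.ncard_coe_finset]
  refine Set.ncard_le_ncard_of_injOn (fun n : ℕ => (n : ZMod m)) (fun n hn => ?_)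
    (fun a ha b hb hab => ?_) (Set.toFinite _)
  · have h : ((n : ℤ) : ZMod m) ∈ f.rootSetMod m :=
      intCast_mem_rootSetMod.mpr (Finset.mem_filter.mp hn).2
    simpa using h
  · have ha' := Finset.mem_Icc.mp (Finset.mem_filter.mp ha).1
    have hb' := Finset.mem_Icc.mp (Finset.mem_filter.mp hb).1
    have h := (Nat.modEq_iff_dvd.mp ((ZMod.natCast_eq_natCast_iff a b m).mp hab))
    have := Int.eq_zero_of_abs_lt_dvd h (by rw [abs_lt]; lia)
    lia

theorem ncard_rootSetMod_mul_le (f : ℤ[X]) {m n : ℕ} (hm : m ≠ 0) (hn : n ≠ 0)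
    (h : m.Coprime n) :
    (f.rootSetMod (m * n)).ncard ≤ (f.rootSetMod m).ncard * (f.rootSetMod n).ncard := by
  have : NeZero m := ⟨hm⟩
  have : NeZero n := ⟨hn⟩
  rw [← Set.ncard_prod]
  refine Set.ncard_le_ncard_of_injOn (ZMod.chineseRemainder h) (fun x hx => ?_)
    (ZMod.chineseRemainder h).injective.injOn (Set.toFinite _)
  exact ⟨map_mem_rootSetMod ((RingHom.fst _ _).comp (ZMod.chineseRemainder h).toRingHom) hx,
    map_mem_rootSetMod ((RingHom.snd _ _).comp (ZMod.chineseRemainder h).toRingHom) hx⟩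

theorem ncard_rootSetMod_prime_le {f : ℤ[X]} (hf : f.IsPrimitive) {p : ℕ} (hp : p.Prime) :
    (f.rootSetMod p).ncard ≤ f.natDegree := by
  have : Fact p.Prime := ⟨hp⟩
  have h0 : f.map (Int.castRingHom (ZMod p)) ≠ 0 := by
    intro h
    have hdvd : C (p : ℤ) ∣ f := by
      rw [C_dvd_iff_dvd_coeff]
      intro i
      rw [← ZMod.intCast_zmod_eq_zero_iff_dvd]
      simpa using congr_arg (coeff · i) h
    exact (Nat.prime_iff_prime_int.mp hp).not_isUnit (hf _ hdvd)
  calc (f.rootSetMod p).ncard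
      ≤ ((f.map (Int.castRingHom (ZMod p))).roots.toFinset : Set (ZMod p)).ncard := by
        refine Set.ncard_le_ncard (fun x hx => ?_) (Set.toFinite _)
        have hx' : aeval x f = 0 := hx
        simpa [mem_roots h0, IsRoot.def, eval_map, aeval_def] using hx'
    _ ≤ (f.map (Int.castRingHom (ZMod p))).roots.card := by
        rw [Set.ncard_coe_finset]
        exact Multiset.toFinset_card_le _
    _ ≤ f.natDegree := (card_roots' _).trans natDegree_map_le

theorem ncard_rootSetMod_sq_le (f : ℤ[X]) {p : ℕ} (hp : p ≠ 0) :
    (f.rootSetMod (p ^ 2)).ncard ≤ (f.rootSetMod p).ncard * p := by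
  have : NeZero p := ⟨hp⟩
  have hdvd : p ∣ p ^ 2 := Dvd.intro_left _ (sq p).symm
  have hIio : (Set.Iio p).ncard = p := by
    rw [← Finset.coe_Iio, Set.ncard_coe_finset, Nat.card_Iio]
  refine le_of_le_of_eq ?_ (congr_arg ((f.rootSetMod p).ncard * ·) hIio)
  rw [← Set.ncard_prod]
  refine Set.ncard_le_ncard_of_injOn
    (fun x => (ZMod.castHom hdvd (ZMod p) x, x.val / p)) (fun x hx => ⟨?_, ?_⟩)
    (fun x _ y _ hxy => ?_) ((Set.toFinite _).prod (Set.finite_Iio p))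
  · exact map_mem_rootSetMod _ hx
  · have := ZMod.val_lt x
    exact Nat.div_lt_of_lt_mul (this.trans_eq (sq p))
  · obtain ⟨h1, h2⟩ := Prod.mk.inj hxy
    rw [ZMod.castHom_apply, ZMod.castHom_apply, ZMod.cast_eq_val, ZMod.cast_eq_val,
      ZMod.natCast_eq_natCast_iff] at h1
    apply ZMod.val_injective
    rw [← Nat.div_add_mod x.val p, ← Nat.div_add_mod y.val p, h2, h1]

theorem ncard_rootSetMod_sq_le_of_not_dvd {f : ℤ[X]} {R : ℤ} {u v : ℤ[X]}
    (h : f * u + f.derivative * v = C R) {p : ℕ} (hp : p.Prime) (hR : ¬ (p : ℤ) ∣ R) :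
    (f.rootSetMod (p ^ 2)).ncard ≤ (f.rootSetMod p).ncard := by
  have : NeZero p := ⟨hp.ne_zero⟩
  have hdvd : p ∣ p ^ 2 := Dvd.intro_left _ (sq p).symm
  refine Set.ncard_le_ncard_of_injOn (ZMod.castHom hdvd (ZMod p))
    (fun x hx => map_mem_rootSetMod _ hx) (fun x hx y hy hxy => ?_) (Set.toFinite _)
  obtain ⟨a, rfl⟩ := ZMod.intCast_surjective x
  obtain ⟨b, rfl⟩ := ZMod.intCast_surjective y
  rw [intCast_mem_rootSetMod] at hx hy
  rw [map_intCast, map_intCast, ZMod.intCast_eq_intCast_iff_dvd_sub] at hxy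
  rw [ZMod.intCast_eq_intCast_iff_dvd_sub]
  push_cast at hx hy ⊢
  have hpa : ¬ (p : ℤ) ∣ f.derivative.eval a := fun hd => hR <| by
    have := congr_arg (eval a) h
    rw [eval_C, eval_add, eval_mul, eval_mul] at this
    rw [← this]
    exact dvd_add (((Dvd.intro_left _ (sq (p : ℤ)).symm).trans hx).mul_right _) (hd.mul_right _)
  obtain ⟨k, hk⟩ := binomExpansion f a (b - a)
  rw [add_sub_cancel] at hk
  have h2 : (p : ℤ) ^ 2 ∣ f.derivative.eval a * (b - a) := by
    have : f.derivative.eval a * (b - a) = f.eval b - f.eval a - k * (b - a) ^ 2 := by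
      rw [hk]; ring
    rw [this]
    exact dvd_sub (dvd_sub hy hx) ((pow_dvd_pow_of_dvd hxy 2).mul_left _)
  exact (IsCoprime.pow_left
    ((Nat.prime_iff_prime_int.mp hp).coprime_iff_not_dvd.mpr hpa)).dvd_of_dvd_mul_left h2

theorem ncard_rootSetMod_sq_le_card_divisors_pow_mul_gcd {f : ℤ[X]} (hf : f.IsPrimitive) {j : ℕ}
    (hj : f.natDegree ≤ 2 ^ j) {R : ℤ} {u v : ℤ[X]} (h : f * u + f.derivative * v = C R)
    (e : ℕ) (he : Squarefree e) :
    (f.rootSetMod (e ^ 2)).ncard ≤ e.divisors.card ^ j * R.natAbs.gcd e := by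
  induction e using Nat.recOnPosPrimePosCoprime with
  | zero => exact absurd he not_squarefree_zero
  | one =>
    have : (f.rootSetMod (1 ^ 2)).ncard ≤ 1 := by
      rw [one_pow]
      exact Set.ncard_le_one_of_subsingleton _
    simpa using this
  | prime_pow p n hp hn =>
    obtain rfl : n = 1 := ((Nat.squarefree_pow_iff hp.one_lt.ne' hn.ne').mp he).2
    have hdeg := ncard_rootSetMod_prime_le hf hp
    rw [pow_one, hp.divisors, Finset.card_pair hp.one_lt.ne]
    by_cases hR : (p : ℤ) ∣ R
    · rw [Nat.gcd_eq_right (Int.natCast_dvd.mp hR)]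
      exact (ncard_rootSetMod_sq_le f hp.ne_zero).trans
        (Nat.mul_le_mul_right _ (hdeg.trans hj))
    · have hc : R.natAbs.gcd p = 1 :=
        (((Nat.Prime.coprime_iff_not_dvd hp).mpr fun h' => hR (Int.natCast_dvd.mpr h'))).symm
      rw [hc, mul_one]
      exact (ncard_rootSetMod_sq_le_of_not_dvd h hp hR).trans (hdeg.trans hj)
  | coprime a b ha hb hab iha ihb =>
    rw [mul_pow, Nat.Coprime.card_divisors_mul hab, Nat.Coprime.gcd_mul _ hab, mul_pow]
    refine (ncard_rootSetMod_mul_le f (by positivity) (by positivity) (hab.pow 2 2)).trans ?_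
    refine (Nat.mul_le_mul (iha (he.squarefree_of_dvd (dvd_mul_right a b)))
      (ihb (he.squarefree_of_dvd (dvd_mul_left b a)))).trans_eq ?_
    ring

end Polynomial

/-- `∑ gcd(R, e) e ^ (-s) ≪ τ(R)` for `s > 1`, over any finite set of `e`. -/
theorem Nat.exists_sum_gcd_mul_rpow_le {s : ℝ} (hs : 1 < s) :
    ∃ S : ℝ, 0 < S ∧ ∀ (R : ℕ), R ≠ 0 → ∀ u : Finset ℕ,
      ∑ e ∈ u, (R.gcd e : ℝ) * (e : ℝ) ^ (-s) ≤ S * R.divisors.card := by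
  have hsum : Summable fun n : ℕ => (n : ℝ) ^ (-s) := Real.summable_nat_rpow.mpr (by linarith)
  have hnn : ∀ n : ℕ, 0 ≤ (n : ℝ) ^ (-s) := fun n => by positivity
  refine ⟨∑' n : ℕ, (n : ℝ) ^ (-s), hsum.tsum_pos hnn 1 (by simp), fun R hR u => ?_⟩
  have hmul : ∀ g ∈ R.divisors, ∑ e ∈ u with g ∣ e, (g : ℝ) * (e : ℝ) ^ (-s) ≤
      ∑' n : ℕ, (n : ℝ) ^ (-s) := by
    intro g hg
    have hg0 : g ≠ 0 := (Nat.pos_of_mem_divisors hg).ne'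
    have hg1 : (1 : ℝ) ≤ g := by exact_mod_cast Nat.pos_of_mem_divisors hg
    have hinj : Set.InjOn (fun e => e / g) (u.filter (g ∣ ·) : Set ℕ) := by
      intro a ha b hb hab
      exact (Nat.div_left_inj (Finset.mem_filter.mp ha).2 (Finset.mem_filter.mp hb).2).mp hab
    calc ∑ e ∈ u with g ∣ e, (g : ℝ) * (e : ℝ) ^ (-s)
        ≤ ∑ e ∈ u with g ∣ e, ((e / g : ℕ) : ℝ) ^ (-s) := by
          refine Finset.sum_le_sum fun e he => ?_
          obtain ⟨k, rfl⟩ := (Finset.mem_filter.mp he).2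
          rw [Nat.mul_div_cancel_left _ (Nat.pos_of_ne_zero hg0), Nat.cast_mul,
            Real.mul_rpow (by positivity) (by positivity), ← mul_assoc]
          refine mul_le_of_le_one_left (hnn k) ?_
          rw [← Real.rpow_one_add' (by positivity) (by linarith)]
          exact Real.rpow_le_one_of_one_le_of_nonpos hg1 (by linarith)
      _ = ∑ k ∈ (u.filter (g ∣ ·)).image (fun e => e / g), (k : ℝ) ^ (-s) := by
          rw [Finset.sum_image hinj]
      _ ≤ _ := hsum.sum_le_tsum _ fun n _ => hnn n
  calc ∑ e ∈ u, (R.gcd e : ℝ) * (e : ℝ) ^ (-s)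
      ≤ ∑ e ∈ u, ∑ g ∈ R.divisors, if g ∣ e then (g : ℝ) * (e : ℝ) ^ (-s) else 0 := by
        refine Finset.sum_le_sum fun e _ => ?_
        have hmem : R.gcd e ∈ R.divisors := Nat.mem_divisors.mpr ⟨Nat.gcd_dvd_left _ _, hR⟩
        have := Finset.single_le_sum (f := fun g : ℕ => if g ∣ e then (g : ℝ) * (e : ℝ) ^ (-s)
          else 0) (fun g _ => by split_ifs <;> positivity) hmem
        simpa only [if_pos (Nat.gcd_dvd_right R e)] using this
    _ = ∑ g ∈ R.divisors, ∑ e ∈ u with g ∣ e, (g : ℝ) * (e : ℝ) ^ (-s) := by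
        rw [Finset.sum_comm]
        simp_rw [Finset.sum_filter]
    _ ≤ ∑ g ∈ R.divisors, ∑' n : ℕ, (n : ℝ) ^ (-s) := Finset.sum_le_sum hmul
    _ = _ := by rw [Finset.sum_const, nsmul_eq_mul, mul_comm]

/-- For a square-free polynomial `f` with coprime coefficients of height at most `H`,
and `D ≤ H^A`, one has `∑_{d > D squarefree} ρ_f(d²)/d² ≪ D⁻¹·H^ε`. -/
theorem sum_rho_tail_le (A ε : ℝ) (hA : 1 ≤ A) (hε : 0 < ε) (d : ℕ) :
    ∃ C : ℝ, 0 < C ∧ ∀ (f : Polynomial ℤ) (H D : ℝ), 2 ≤ H →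
      Squarefree f → f.natDegree ≤ d → f.content = 1 →
      (∀ i, (|f.coeff i| : ℝ) ≤ H) → 1 ≤ D → D ≤ H ^ A →
      (∑' e : ℕ, if D < (e : ℝ) ∧ Squarefree e then (polyRho f (e ^ 2) : ℝ) / (e : ℝ) ^ 2 else 0)
        ≤ C * D⁻¹ * H ^ ε := by
  have hA0 : 0 < A := one_pos.trans_le hA
  set δ : ℝ := min 1 (ε / (2 * A))
  have hδ0 : 0 < δ := lt_min one_pos (by positivity)
  have hδ1 : δ ≤ 1 := min_le_left _ _
  have hδA : A * δ ≤ ε / 2 := by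
    calc A * δ ≤ A * (ε / (2 * A)) := by gcongr; exact min_le_right _ _
      _ = ε / 2 := by field_simp
  set η : ℝ := ε / (2 * (2 * d + 1)) with hη
  have hη0 : 0 < η := by positivity
  have hηd : (2 * d : ℕ) * η ≤ ε / 2 := by
    calc (2 * d : ℕ) * η ≤ (2 * d + 1) * η := by push_cast; gcongr; linarith
      _ = ε / 2 := by rw [hη]; field_simp
  obtain ⟨C₁, hC₁, hτ₁⟩ := Nat.exists_card_divisors_le_rpow
    (show 0 < δ / 2 / (d + 1) by positivity)
  obtain ⟨C₂, hC₂, hτ₂⟩ := Nat.exists_card_divisors_le_rpow hη0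
  obtain ⟨S, hS, hsum⟩ := Nat.exists_sum_gcd_mul_rpow_le (show 1 < 1 + δ / 2 by linarith)
  set K : ℝ := (2 * d).factorial * (d + 1) ^ (2 * d) with hK
  refine ⟨C₁ ^ d * (S * (C₂ * K ^ η)), by positivity,
    fun f H D hH hsq hdeg hcont hcoeff hD hDH => ?_⟩
  have hH0 : 0 < H := by linarith
  have hD0 : 0 < D := by linarith
  have hprim : f.IsPrimitive := Polynomial.isPrimitive_iff_content_eq_one.mpr hcont
  obtain ⟨R, hR0, hRle, p, q, hpq⟩ :=
    Polynomial.exists_mul_add_derivative_mul_eq_C hprim hsq hdeg (by linarith) hcoeff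
  have hRn : R.natAbs ≠ 0 := Int.natAbs_ne_zero.mpr hR0
  have hτR : (R.natAbs.divisors.card : ℝ) ≤ C₂ * K ^ η * H ^ (ε / 2) := by
    have hRK : (R.natAbs : ℝ) ≤ K * H ^ (2 * d) := by
      rw [Nat.cast_natAbs, Int.cast_abs]
      exact hRle.trans_eq (by rw [hK, mul_pow, mul_assoc])
    calc (R.natAbs.divisors.card : ℝ) ≤ C₂ * (R.natAbs : ℝ) ^ η := hτ₂ _ hRn
      _ ≤ C₂ * (K * H ^ (2 * d)) ^ η := by gcongr
      _ = C₂ * K ^ η * H ^ ((2 * d : ℕ) * η) := by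
          rw [Real.mul_rpow (by positivity) (by positivity), ← Real.rpow_natCast H,
            ← Real.rpow_mul hH0.le, mul_assoc]
      _ ≤ _ := by gcongr; linarith
  have hterm : ∀ e : ℕ, D < (e : ℝ) → Squarefree e →
      (polyRho f (e ^ 2) : ℝ) / (e : ℝ) ^ 2 ≤
        C₁ ^ d * D ^ (δ - 1) * ((R.natAbs.gcd e : ℝ) * (e : ℝ) ^ (-(1 + δ / 2))) := by
    intro e he hesq
    have he0 : (0 : ℝ) < e := hD0.trans he
    have he1 : (1 : ℝ) ≤ e := hD.trans he.le
    have hρ : (polyRho f (e ^ 2) : ℝ) ≤ (e.divisors.card : ℝ) ^ d * R.natAbs.gcd e := by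
      exact_mod_cast (Polynomial.polyRho_le_ncard_rootSetMod f (pow_ne_zero 2 hesq.ne_zero)).trans
        (Polynomial.ncard_rootSetMod_sq_le_card_divisors_pow_mul_gcd hprim
          (hdeg.trans Nat.lt_two_pow_self.le) hpq e hesq)
    have hτe : (e.divisors.card : ℝ) ^ d ≤ C₁ ^ d * (e : ℝ) ^ (δ / 2) := by
      calc (e.divisors.card : ℝ) ^ d ≤ (C₁ * (e : ℝ) ^ (δ / 2 / (d + 1))) ^ d := by
            gcongr
            exact hτ₁ e hesq.ne_zero
        _ = C₁ ^ d * (e : ℝ) ^ (δ / 2 / (d + 1) * d) := by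
            rw [mul_pow, ← Real.rpow_mul_natCast he0.le]
        _ ≤ _ := by
            gcongr
            rw [div_mul_eq_mul_div, div_le_iff₀ (by positivity)]
            nlinarith
    have hrankin : (1 : ℝ) ≤ D ^ (δ - 1) * (e : ℝ) ^ (1 - δ) := by
      rw [show δ - 1 = -(1 - δ) by ring, Real.rpow_neg hD0.le, inv_mul_eq_div,
        one_le_div (by positivity)]
      gcongr
    have hexp : (e : ℝ) ^ (1 - δ) * (e : ℝ) ^ (δ / 2) / (e : ℝ) ^ 2 =
        (e : ℝ) ^ (-(1 + δ / 2)) := by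
      rw [← Real.rpow_natCast (e : ℝ) 2, ← Real.rpow_add he0, ← Real.rpow_sub he0]
      congr 1
      push_cast
      ring
    calc (polyRho f (e ^ 2) : ℝ) / (e : ℝ) ^ 2
        ≤ (C₁ ^ d * (e : ℝ) ^ (δ / 2) * R.natAbs.gcd e) / (e : ℝ) ^ 2 := by
          gcongr
          exact hρ.trans (by gcongr)
      _ ≤ (D ^ (δ - 1) * (e : ℝ) ^ (1 - δ)) *
            ((C₁ ^ d * (e : ℝ) ^ (δ / 2) * R.natAbs.gcd e) / (e : ℝ) ^ 2) :=
          le_mul_of_one_le_left (by positivity) hrankin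
      _ = _ := by
          rw [← hexp]
          ring
  refine Real.tsum_le_of_sum_le (fun e => ?_) fun u => ?_
  · dsimp only [Pi.zero_apply]
    split_ifs <;> positivity
  rw [← Finset.sum_filter]
  set v := u.filter fun e : ℕ => D < (e : ℝ) ∧ Squarefree e
  calc ∑ e ∈ v, (polyRho f (e ^ 2) : ℝ) / (e : ℝ) ^ 2
      ≤ ∑ e ∈ v, C₁ ^ d * D ^ (δ - 1) *
          ((R.natAbs.gcd e : ℝ) * (e : ℝ) ^ (-(1 + δ / 2))) :=
        Finset.sum_le_sum fun e he =>
          hterm e (Finset.mem_filter.mp he).2.1 (Finset.mem_filter.mp he).2.2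
    _ ≤ C₁ ^ d * D ^ (δ - 1) * (S * R.natAbs.divisors.card) := by
        rw [← Finset.mul_sum]
        gcongr
        exact hsum _ hRn _
    _ ≤ C₁ ^ d * (D⁻¹ * H ^ (ε / 2)) * (S * (C₂ * K ^ η * H ^ (ε / 2))) := by
        have hDδ : D ^ δ ≤ H ^ (ε / 2) := by
          calc D ^ δ ≤ (H ^ A) ^ δ := by gcongr
            _ = H ^ (A * δ) := (Real.rpow_mul hH0.le _ _).symm
            _ ≤ _ := by gcongr; linarith
        rw [Real.rpow_sub_one hD0.ne', div_eq_inv_mul]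
        gcongr
    _ = _ := by
        rw [show H ^ ε = H ^ (ε / 2) * H ^ (ε / 2) by
          rw [← Real.rpow_add hH0, add_halves]]
        ring
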